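/- arXiv:1304.3956 — 4 statements merged into one kernel-verified Lean document; each statement's English description precedes it below -/
import Mathlib

section
/- Let m ≥ 1 and μ₁,…,μ_m ∈ ℂ, and let f = X₁⋯X_m·(μ₁X₁ + ⋯ + μ_mX_m) ∈ ℂ[X₁,…,X_m]. Then for every n ≥ 1, 𝓛(f^n) = n! · ∑ (∏_{i=1}^m (n+j_i)!/j_i!) · μ₁^{j₁}⋯μ_m^{j_m}, the sum running over all (j₁,…,j_m) ∈ ℕ^m with j₁ + ⋯ + j_m = n. Equivalently, 𝓛(f^n) = (n!)^{m+1}·u_n, where u_n is the n-th coefficient sequence of the multiplicative inversion formula for X(1−μ₁X)⋯(1−μ_mX). -/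
open MvPolynomial

/-- The factorial map `𝓛 : ℂ[X₁,…,X_m] → ℂ`, defined on monomials by
`𝓛(X₁^{l₁}⋯X_m^{l_m}) = l₁!⋯l_m!`. -/
noncomputable def factMap (m : ℕ) (f : MvPolynomial (Fin m) ℂ) : ℂ :=
  ∑ d ∈ f.support, f.coeff d * ∏ i, ((d i).factorial : ℂ)

theorem factMap_add' (m : ℕ) (p q : MvPolynomial (Fin m) ℂ) :
    factMap m (p + q) = factMap m p + factMap m q := by
  classical
  have key : ∀ (r : MvPolynomial (Fin m) ℂ) (S : Finset (Fin m →₀ ℕ)), r.support ⊆ S →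
      factMap m r = ∑ d ∈ S, r.coeff d * ∏ i, ((d i).factorial : ℂ) := by
    intro r S h
    refine Finset.sum_subset h ?_
    intro d _ hd
    rw [notMem_support_iff.mp hd, zero_mul]
  rw [key (p + q) (p.support ∪ q.support) MvPolynomial.support_add,
    key p (p.support ∪ q.support) Finset.subset_union_left,
    key q (p.support ∪ q.support) Finset.subset_union_right, ← Finset.sum_add_distrib]
  simp [add_mul]

theorem factMap_sum' (m : ℕ) {ι : Type*} (s : Finset ι) (p : ι → MvPolynomial (Fin m) ℂ) :
    factMap m (∑ i ∈ s, p i) = ∑ i ∈ s, factMap m (p i) := by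
  classical
  induction s using Finset.induction_on with
  | empty => simp [factMap]
  | insert a s ha ih => rw [Finset.sum_insert ha, Finset.sum_insert ha, factMap_add', ih]

theorem factMap_monomial' (m : ℕ) (d : Fin m →₀ ℕ) (c : ℂ) :
    factMap m (monomial d c) = c * ∏ i, ((d i).factorial : ℂ) := by
  classical
  by_cases hc : c = 0
  · simp [factMap, hc]
  · simp [factMap, support_monomial, hc]

theorem stmt_7 (m : ℕ) (hm : 1 ≤ m) (μ : Fin m → ℂ)
    (f : MvPolynomial (Fin m) ℂ)
    (hf : f = (∏ i : Fin m, X i) * (∑ i : Fin m, C (μ i) * X i)) :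
    ∀ n : ℕ, 1 ≤ n →
      factMap m (f ^ n) =
        (n.factorial : ℂ) *
          ∑ j ∈ (Fintype.piFinset fun _ : Fin m => Finset.range (n + 1)).filter
              (fun j : Fin m → ℕ => ∑ i : Fin m, j i = n),
            (∏ i : Fin m, (((n + j i).factorial : ℂ) / ((j i).factorial : ℂ))) *
              ∏ i : Fin m, μ i ^ j i := by
  intro n _
  have hS : (Fintype.piFinset fun _ : Fin m => Finset.range (n + 1)).filter
      (fun j : Fin m → ℕ => ∑ i : Fin m, j i = n) = Finset.piAntidiag Finset.univ n := by
    ext j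
    simp only [Finset.mem_filter, Fintype.mem_piFinset, Finset.mem_range, Finset.mem_piAntidiag,
      Finset.mem_univ, implies_true, and_true, and_iff_right_iff_imp]
    intro h i
    have := Finset.single_le_sum (f := j) (fun _ _ => Nat.zero_le _) (Finset.mem_univ i)
    omega
  rw [hS, hf, mul_pow, Finset.sum_pow_eq_sum_piAntidiag, Finset.mul_sum, factMap_sum',
    Finset.mul_sum]
  refine Finset.sum_congr rfl fun j hj => ?_
  have hj' : ∑ i, j i = n := (Finset.mem_piAntidiag.mp hj).1
  have hmon : (∏ i : Fin m, (X i : MvPolynomial (Fin m) ℂ)) ^ n *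
      ((Nat.multinomial Finset.univ j : MvPolynomial (Fin m) ℂ) *
        ∏ i, (C (μ i) * X i) ^ j i) =
      monomial (Finsupp.equivFunOnFinite.symm fun i => n + j i)
        ((Nat.multinomial Finset.univ j : ℂ) * ∏ i, μ i ^ j i) := by
    rw [monomial_eq, Finsupp.prod_fintype _ _ (fun i => pow_zero _)]
    simp only [mul_pow, Finset.prod_mul_distrib, Finsupp.equivFunOnFinite_symm_apply_apply, pow_add,
      map_mul, map_prod, map_pow, map_natCast, Finset.prod_pow]
    ring
  rw [hmon, factMap_monomial']
  have hmul : (∏ i, ((j i).factorial : ℂ)) * (Nat.multinomial Finset.univ j : ℂ)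
      = (n.factorial : ℂ) := by
    have := Nat.multinomial_spec Finset.univ j
    rw [hj'] at this
    exact_mod_cast this
  have hne : (∏ i, ((j i).factorial : ℂ)) ≠ 0 :=
    Finset.prod_ne_zero_iff.mpr fun i _ => by exact_mod_cast (j i).factorial_ne_zero
  rw [Finset.prod_div_distrib, ← hmul]
  simp only [Finsupp.equivFunOnFinite_symm_apply_apply]
  field_simp
end

section
/- Let m ≥ 1 and μ₁,…,μ_m ∈ ℂ, and set f = X₁⋯X_m·(μ₁X₁ + ⋯ + μ_mX_m) ∈ ℂ[X₁,…,X_m]. If f ≠ 0, then there exists an integer k with 1 ≤ k ≤ N(f) such that 𝓛(f^k) ≠ 0; in particular, if 𝓛(f^k) = 0 for all k ≥ 1, then f = 0. -/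
open MvPolynomial

theorem factMap_eq_sum (m : ℕ) {ι : Type*} (s : Finset ι) (c : ι → ℂ) (d : ι → (Fin m →₀ ℕ)) :
    factMap m (∑ a ∈ s, monomial (d a) (c a)) =
      ∑ a ∈ s, c a * ∏ i, ((d a i).factorial : ℂ) := by
  have key : ∀ g : MvPolynomial (Fin m) ℂ, factMap m g =
      (MvPolynomial.basisMonomials (Fin m) ℂ).constr ℂ
        (fun d => ∏ i, ((d i).factorial : ℂ)) g := by
    intro g
    rw [Module.Basis.constr_apply]
    simp only [smul_eq_mul]
    rfl
  rw [key, map_sum]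
  refine Finset.sum_congr rfl fun a _ => ?_
  have : monomial (d a) (c a) = c a • (MvPolynomial.basisMonomials (Fin m) ℂ) (d a) := by
    simp [MvPolynomial.smul_monomial]
  rw [this, map_smul, Module.Basis.constr_basis, smul_eq_mul]

theorem prodX (m : ℕ) : (∏ i : Fin m, (X i : MvPolynomial (Fin m) ℂ)) =
    monomial (Finsupp.equivFunOnFinite.symm fun _ => 1) 1 := by
  rw [MvPolynomial.monomial_eq, Finsupp.prod_fintype] <;> simp

theorem fpow (m k : ℕ) (μ : Fin m → ℂ) :
    ((∏ i : Fin m, X i) * (∑ i : Fin m, C (μ i) * X i) : MvPolynomial (Fin m) ℂ) ^ k =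
    ∑ a ∈ Finset.piAntidiag Finset.univ k,
      monomial (Finsupp.equivFunOnFinite.symm fun i => a i + k)
        ((Nat.multinomial Finset.univ a : ℂ) * ∏ i, μ i ^ a i) := by
  rw [mul_pow, Finset.sum_pow_eq_sum_piAntidiag, Finset.mul_sum]
  refine Finset.sum_congr rfl fun a _ => ?_
  rw [MvPolynomial.monomial_eq, Finsupp.prod_fintype _ _ (by simp)]
  simp only [mul_pow, Finset.prod_mul_distrib, Finsupp.equivFunOnFinite_symm_apply_apply, pow_add,
    Finset.prod_pow, map_mul, map_prod, map_pow, map_natCast]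
  ring

open PowerSeries in
theorem factMap_fpow (m k : ℕ) (μ : Fin m → ℂ) :
    factMap m (((∏ i : Fin m, MvPolynomial.X i) *
      (∑ i : Fin m, MvPolynomial.C (μ i) * MvPolynomial.X i)) ^ k) =
    (k.factorial : ℂ) ^ (m + 1) * PowerSeries.coeff k
      ((∏ i : Fin m, PowerSeries.rescale (μ i) (PowerSeries.mk 1)) ^ (k + 1)) := by
  rw [fpow, factMap_eq_sum, ← Finset.prod_pow, PowerSeries.coeff_prod, Finset.mul_sum]
  symm
  refine Finset.sum_bij (fun l _ => ⇑l) ?_ ?_ ?_ ?_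
  · intro l hl
    simpa [Finset.mem_finsuppAntidiag, Finset.mem_piAntidiag] using hl
  · intro a _ b _ h
    exact DFunLike.coe_injective h
  · intro b hb
    refine ⟨Finsupp.equivFunOnFinite.symm b, ?_, ?_⟩
    · simpa [Finset.mem_finsuppAntidiag, Finset.mem_piAntidiag] using hb
    · ext; simp
  · intro l hl
    have hs : ∑ i, l i = k := by simpa [Finset.mem_finsuppAntidiag] using hl
    have h1 : ((∏ i, ((l i).factorial : ℂ)) * (Nat.multinomial Finset.univ l : ℂ)) =
        (k.factorial : ℂ) := by
      have := Nat.multinomial_spec Finset.univ (l : Fin m → ℕ)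
      rw [hs] at this
      exact_mod_cast this
    have h2 : ∀ i, PowerSeries.coeff (l i) (PowerSeries.rescale (μ i) (PowerSeries.mk 1) ^ (k+1))
        = μ i ^ l i * ((k + l i).choose k : ℂ) := by
      intro i
      rw [← map_pow, PowerSeries.mk_one_pow_eq_mk_choose_add, PowerSeries.coeff_rescale,
        PowerSeries.coeff_mk]
    have h3 : ∀ i, ((l i + k).factorial : ℂ) =
        ((k + l i).choose k : ℂ) * k.factorial * (l i).factorial := by
      intro i
      rw [add_comm (l i) k, Nat.choose_symm_add]
      exact_mod_cast (Nat.add_choose_mul_factorial_mul_factorial k (l i)).symm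
    simp only [h2, h3, Finsupp.equivFunOnFinite_symm_apply_apply, Finset.prod_mul_distrib,
      Finset.prod_const, Finset.card_univ, Fintype.card_fin]
    rw [pow_succ]
    conv_lhs => rw [← h1]
    conv_rhs => rw [← h1]
    ring

theorem exists_coeff (m : ℕ) (μ : Fin m → ℂ) (n : ℕ)
    (hn : n = (Finset.univ.filter fun i => μ i ≠ 0).card) (hpos : 1 ≤ n) :
    ∃ k, 1 ≤ k ∧ k ≤ n ∧ PowerSeries.coeff k
      ((∏ i : Fin m, PowerSeries.rescale (μ i) (PowerSeries.mk 1)) ^ (k + 1)) ≠ 0 := by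
  classical
  set P : Polynomial ℂ := ∏ i : Fin m, (1 - Polynomial.C (μ i) * Polynomial.X) with hP
  have hd : P.natDegree = n := by
    have h1 : ∀ i, (1 - Polynomial.C (μ i) * Polynomial.X) =
        Polynomial.C (-μ i) * Polynomial.X + Polynomial.C 1 := by
      intro i; simp; ring
    rw [hP, Polynomial.natDegree_prod, hn, Finset.card_filter]
    · refine Finset.sum_congr rfl fun i _ => ?_
      rw [h1]
      split_ifs with h
      · exact Polynomial.natDegree_linear (neg_ne_zero.mpr h)
      · simp at h; simp [h]
    · intro i _ h
      have := congrArg (Polynomial.eval 0) h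
      simp at this
  have hn0 : P.coeff n ≠ 0 := by
    rw [← hd]
    apply Polynomial.leadingCoeff_ne_zero.mpr
    intro h; rw [h] at hd; simp at hd; omega
  have hP0 : P.coeff 0 = 1 := by
    rw [Polynomial.coeff_zero_eq_eval_zero, hP, Polynomial.eval_prod]; simp
  have hex : ∃ j, 1 ≤ j ∧ P.coeff j ≠ 0 := ⟨n, hpos, hn0⟩
  set j := Nat.find hex with hj
  obtain ⟨hj1, hj2⟩ := Nat.find_spec hex
  rw [← hj] at hj1 hj2
  have hmin : ∀ i, 1 ≤ i → i < j → P.coeff i = 0 := by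
    intro i hi hij
    have := Nat.find_min hex hij
    by_contra h; exact this ⟨hi, h⟩
  have hjn : j ≤ n := Nat.find_min' hex ⟨hpos, hn0⟩
  clear_value j
  have hj0 : j ≠ 0 := by omega
  refine ⟨j, hj1, hjn, ?_⟩
  set φ : PowerSeries ℂ := ∏ i : Fin m, PowerSeries.rescale (μ i) (PowerSeries.mk 1) with hφ
  have hPφ : (P : PowerSeries ℂ) * φ = 1 := by
    have : (P : PowerSeries ℂ) = ∏ i : Fin m, (1 - PowerSeries.C (μ i) * PowerSeries.X) := by
      rw [hP, ← Polynomial.coeToPowerSeries.ringHom_apply, map_prod]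
      simp
    rw [this, hφ, ← Finset.prod_mul_distrib]
    refine Finset.prod_eq_one fun i _ => ?_
    have h := congrArg (PowerSeries.rescale (μ i)) (PowerSeries.mk_one_mul_one_sub_eq_one ℂ)
    rw [map_mul, map_sub, map_one, PowerSeries.rescale_X] at h
    rw [mul_comm]; exact h
  have hdvd : (PowerSeries.X : PowerSeries ℂ) ^ j ∣ (P : PowerSeries ℂ) - 1 := by
    rw [PowerSeries.X_pow_dvd_iff]
    intro i hi
    rcases Nat.eq_zero_or_pos i with rfl | h
    · simp [hP0]
    · simp [hmin i h hi, PowerSeries.coeff_one, h.ne']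
  obtain ⟨Q, hQ⟩ := hdvd
  have hQ0 : PowerSeries.coeff 0 Q = P.coeff j := by
    have := congrArg (PowerSeries.coeff j) hQ
    rw [PowerSeries.coeff_X_pow_mul'] at this
    simpa [PowerSeries.coeff_one, hj0] using this.symm
  have hφ0 : PowerSeries.coeff 0 φ = 1 := by
    have := congrArg (PowerSeries.coeff 0) hPφ
    rw [PowerSeries.coeff_zero_eq_constantCoeff_apply, map_mul] at this
    simpa [hP0] using this
  have hφ1 : φ = 1 + PowerSeries.X ^ j * (-(Q * φ)) := by
    linear_combination hPφ - φ * hQ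
  have hb : ∀ N : ℕ, ∃ R : PowerSeries ℂ, φ ^ N =
      1 + PowerSeries.X ^ j * ((N : PowerSeries ℂ) * (-(Q * φ))) +
        PowerSeries.X ^ (j + 1) * R := by
    intro N
    obtain ⟨i, hi⟩ : ∃ i, j = i + 1 := ⟨j - 1, by omega⟩
    induction N with
    | zero => exact ⟨0, by simp⟩
    | succ N ih =>
      obtain ⟨R, hR⟩ := ih
      refine ⟨R * φ + PowerSeries.X ^ i * (N : PowerSeries ℂ) * (Q * φ) ^ 2, ?_⟩
      rw [pow_succ, hR]
      generalize hψ : Q * φ = ψ at *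
      have e : (PowerSeries.X : PowerSeries ℂ) ^ (j + 1) * PowerSeries.X ^ i =
        PowerSeries.X ^ j * PowerSeries.X ^ j := by rw [hi]; ring
      push_cast
      linear_combination (1 + PowerSeries.X ^ j * ((N : PowerSeries ℂ) * (-ψ))) * hφ1 -
        (N : PowerSeries ℂ) * ψ ^ 2 * e
  obtain ⟨R, hR⟩ := hb (j + 1)
  rw [hR, map_add, map_add, PowerSeries.coeff_X_pow_mul', PowerSeries.coeff_X_pow_mul']
  have hc : PowerSeries.constantCoeff Q = P.coeff j := by simpa using hQ0
  have hc' : PowerSeries.constantCoeff φ = 1 := by simpa using hφ0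
  have hne : ((j : ℂ) + 1) ≠ 0 := by exact_mod_cast Nat.succ_ne_zero j
  simp [PowerSeries.coeff_one, hj0, hc, hc', hne, hj2]

theorem card_supp (m : ℕ) (μ : Fin m → ℂ) :
    (Finset.univ.filter fun i => μ i ≠ 0).card ≤
      ((∏ i : Fin m, X i) * (∑ i : Fin m, C (μ i) * X i) : MvPolynomial (Fin m) ℂ).support.card := by
  classical
  refine Finset.card_le_card_of_injOn
    (fun i => (Finsupp.equivFunOnFinite.symm fun _ => 1) + Finsupp.single i 1) ?_ ?_
  · intro i hi
    have hi' : μ i ≠ 0 := by simpa using hi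
    simp only [Finset.mem_coe, MvPolynomial.mem_support_iff]
    rw [prodX, MvPolynomial.coeff_monomial_mul, one_mul, MvPolynomial.coeff_sum]
    simpa [MvPolynomial.coeff_C_mul, MvPolynomial.coeff_X, Finsupp.single_left_inj] using hi'
  · intro a _ b _ h
    have := add_left_cancel h
    exact (Finsupp.single_left_inj one_ne_zero).mp this

theorem stmt_10 (m : ℕ) (hm : 1 ≤ m) (μ : Fin m → ℂ)
    (f : MvPolynomial (Fin m) ℂ)
    (hf : f = (∏ i : Fin m, X i) * (∑ i : Fin m, C (μ i) * X i)) :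
    (f ≠ 0 → ∃ k : ℕ, 1 ≤ k ∧ k ≤ f.support.card ∧ factMap m (f ^ k) ≠ 0) ∧
    ((∀ k : ℕ, 1 ≤ k → factMap m (f ^ k) = 0) → f = 0) := by
  have main : f ≠ 0 → ∃ k : ℕ, 1 ≤ k ∧ k ≤ f.support.card ∧ factMap m (f ^ k) ≠ 0 := by
    intro h0
    have hpos : 1 ≤ (Finset.univ.filter fun i => μ i ≠ 0).card := by
      rw [Nat.one_le_iff_ne_zero]
      intro hc
      apply h0
      have hz : ∀ i, μ i = 0 := by
        simpa [Finset.filter_eq_empty_iff] using hc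
      rw [hf]; simp [hz]
    obtain ⟨k, h1, h2, h3⟩ := exists_coeff m μ _ rfl hpos
    refine ⟨k, h1, h2.trans (hf ▸ card_supp m μ), ?_⟩
    rw [hf, factMap_fpow]
    exact mul_ne_zero (pow_ne_zero _ (by exact_mod_cast k.factorial_ne_zero)) h3
  refine ⟨main, fun h => ?_⟩
  by_contra h0
  obtain ⟨k, h1, _, h3⟩ := main h0
  exact h3 (h k h1)
end

section
/- (R(2)) Let α₁, α₂ ∈ ℂ and for each integer k ≥ 1 set u_k = (1/k!) · ∑_{j₁ + 2j₂ = k, j₁,j₂ ≥ 0} ((k + j₁ + j₂)! / (j₁!·j₂!)) · α₁^{j₁} α₂^{j₂}. If there exists n ≥ 1 with u_n = u_{n+1} = 0, then α₁ = α₂ = 0. -/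
/-- index set -/
def idxS (k : ℕ) : Finset (ℕ × ℕ) :=
  (Finset.range (k + 1) ×ˢ Finset.range (k + 1)).filter (fun p : ℕ × ℕ => p.1 + 2 * p.2 = k)

lemma mem_idxS (k : ℕ) (p : ℕ × ℕ) : p ∈ idxS k ↔ p.1 + 2 * p.2 = k := by
  simp only [idxS, Finset.mem_filter, Finset.mem_product, Finset.mem_range]
  omega

/-- the numbers `u_k` -/
noncomputable def bigU (a b : ℂ) (k : ℕ) : ℂ :=
  (1 / (k.factorial : ℂ)) * ∑ p ∈ idxS k,
    (((k + p.1 + p.2).factorial : ℂ) / ((p.1.factorial : ℂ) * (p.2.factorial : ℂ))) *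
      a ^ p.1 * b ^ p.2

lemma shiftU (a b : ℂ) (m s t K : ℕ) (hK : K = m + s + 2 * t) :
    a ^ s * b ^ t * bigU a b m = ∑ p ∈ idxS K,
      (1 / (m.factorial : ℂ)) * ((((m + p.1 + p.2 - s - t).factorial : ℂ) /
        ((p.1.factorial : ℂ) * (p.2.factorial : ℂ))) * (p.1.descFactorial s : ℂ) *
        (p.2.descFactorial t : ℂ)) * (a ^ p.1 * b ^ p.2) := by
  rw [bigU, Finset.mul_sum, Finset.mul_sum]
  apply Finset.sum_of_injOn (fun p : ℕ × ℕ => (p.1 + s, p.2 + t))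
  · rintro ⟨x, y⟩ _ ⟨z, w⟩ _ h
    simp only [Prod.mk.injEq] at h ⊢
    omega
  · rintro ⟨x, y⟩ h
    simp only [Finset.mem_coe, mem_idxS] at h ⊢
    omega
  · rintro ⟨x, y⟩ h h2
    simp only [mem_idxS] at h
    have : x < s ∨ y < t := by
      by_contra! hc
      apply h2
      refine ⟨(x - s, y - t), ?_, ?_⟩
      · simp only [Finset.mem_coe, mem_idxS]; omega
      · simp only [Prod.mk.injEq]; omega
    rcases this with h | h
    · simp [Nat.descFactorial_eq_zero_iff_lt.2 h]
    · simp [Nat.descFactorial_eq_zero_iff_lt.2 h]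
  · rintro ⟨x, y⟩ h
    have e : m + (x + s) + (y + t) - s - t = m + x + y := by omega
    have h1 := Nat.factorial_mul_descFactorial (n := x + s) (k := s) (by omega)
    have h2 := Nat.factorial_mul_descFactorial (n := y + t) (k := t) (by omega)
    rw [Nat.add_sub_cancel] at h1 h2
    simp only [e]
    rw [← h1, ← h2]
    have h3 : ((x + s).descFactorial s : ℂ) ≠ 0 := by
      rw [Nat.cast_ne_zero, Ne, Nat.descFactorial_eq_zero_iff_lt]; omega
    have h4 : ((y + t).descFactorial t : ℂ) ≠ 0 := by
      rw [Nat.cast_ne_zero, Ne, Nat.descFactorial_eq_zero_iff_lt]; omega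
    have h5 : (x.factorial : ℂ) ≠ 0 := by exact_mod_cast x.factorial_ne_zero
    have h6 : (y.factorial : ℂ) ≠ 0 := by exact_mod_cast y.factorial_ne_zero
    have h7 : (m.factorial : ℂ) ≠ 0 := by exact_mod_cast m.factorial_ne_zero
    push_cast
    field_simp
    ring

lemma recU (a b : ℂ) (k : ℕ) :
    ((k : ℂ) + 2) * (k + 1) * (a ^ 2 * b ^ 0 * bigU a b (k + 2)
      + 4 * (a ^ 0 * b ^ 1 * bigU a b (k + 2)))
    - (k + 1) * (2 * k + 3) * (9 * (a ^ 1 * b ^ 1 * bigU a b (k + 1))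
      + 2 * (a ^ 3 * b ^ 0 * bigU a b (k + 1)))
    - 3 * (3 * k + 2) * (3 * k + 4) * (a ^ 0 * b ^ 2 * bigU a b k) = 0 := by
  rw [shiftU a b (k + 2) 2 0 (k + 4) (by ring), shiftU a b (k + 2) 0 1 (k + 4) (by ring),
    shiftU a b (k + 1) 1 1 (k + 4) (by ring), shiftU a b (k + 1) 3 0 (k + 4) (by ring),
    shiftU a b k 0 2 (k + 4) (by ring)]
  simp only [Finset.mul_sum, ← Finset.sum_add_distrib, ← Finset.sum_sub_distrib]
  apply Finset.sum_eq_zero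
  rintro ⟨i, j⟩ h
  simp only [mem_idxS] at h
  simp only
  obtain ⟨N, hN⟩ : ∃ N, k + i + j = N + 2 := ⟨k + i + j - 2, by omega⟩
  have e1 : k + 2 + i + j - 2 - 0 = N + 2 := by omega
  have e2 : k + 2 + i + j - 0 - 1 = N + 3 := by omega
  have e3 : k + 1 + i + j - 1 - 1 = N + 1 := by omega
  have e4 : k + 1 + i + j - 3 - 0 = N := by omega
  have e5 : k + i + j - 0 - 2 = N := by omega
  rw [e1, e2, e3, e4, e5]
  have d1 : ∀ x : ℕ, (x.descFactorial 1 : ℂ) = x := by intro x; simp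
  have d2 : ∀ x : ℕ, (x.descFactorial 2 : ℂ) = x * (x - 1) := by
    intro x
    rcases x with _ | x
    · simp
    · simp [Nat.descFactorial_succ]; ring
  have d3 : ∀ x : ℕ, (x.descFactorial 3 : ℂ) = x * (x - 1) * (x - 2) := by
    intro x
    rcases x with _ | _ | x
    · simp
    · simp [Nat.descFactorial_succ]
    · simp [Nat.descFactorial_succ]; ring
  rw [d2, d2, d1, d1, d3]
  simp only [Nat.descFactorial_zero, Nat.factorial_succ]
  have hk : (k : ℂ) = i + 2 * j - 4 := by
    have : ((i + 2 * j : ℕ) : ℂ) = ((k + 4 : ℕ) : ℂ) := by rw [h]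
    push_cast at this
    linear_combination -this
  have hN' : (N : ℂ) = 2 * i + 3 * j - 6 := by
    have : ((k + i + j : ℕ) : ℂ) = ((N + 2 : ℕ) : ℂ) := by rw [hN]
    push_cast at this
    linear_combination -this + hk
  have h5 : (i.factorial : ℂ) ≠ 0 := by exact_mod_cast i.factorial_ne_zero
  have h6 : (j.factorial : ℂ) ≠ 0 := by exact_mod_cast j.factorial_ne_zero
  have h7 : (k.factorial : ℂ) ≠ 0 := by exact_mod_cast k.factorial_ne_zero
  have h8 : (k : ℂ) + 1 ≠ 0 := by exact_mod_cast k.succ_ne_zero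
  have h9 : (k : ℂ) + 1 + 1 ≠ 0 := by exact_mod_cast (k + 1).succ_ne_zero
  have key : ((N : ℂ) + 2) * (N + 1) * (i * (i - 1)) + 4 * ((N + 3) * (N + 2) * (N + 1) * j)
      - (2 * k + 3) * (9 * ((N + 1) * i * j) + 2 * (i * (i - 1) * (i - 2)))
      - 3 * (3 * k + 2) * (3 * k + 4) * (j * (j - 1)) = 0 := by
    rw [hk, hN']; ring
  clear hk hN'
  push_cast
  trans (((N : ℂ) + 2) * (N + 1) * (i * (i - 1)) + 4 * ((N + 3) * (N + 2) * (N + 1) * j)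
      - (2 * k + 3) * (9 * ((N + 1) * i * j) + 2 * (i * (i - 1) * (i - 2)))
      - 3 * (3 * k + 2) * (3 * k + 4) * (j * (j - 1))) *
      ((N.factorial : ℂ) / (k.factorial * i.factorial * j.factorial) * (a ^ i * b ^ j))
  · field_simp
    ring
  · rw [key, zero_mul]

lemma bigU_zero (a b : ℂ) : bigU a b 0 = 1 := by
  have : idxS 0 = {(0, 0)} := by
    ext ⟨x, y⟩
    simp only [mem_idxS, Finset.mem_singleton, Prod.mk.injEq]; omega
  simp [bigU, this]

lemma bigU_b_zero (a : ℂ) (n : ℕ) (h : bigU a 0 n = 0) : a = 0 := by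
  rw [bigU, Finset.sum_eq_single (n, 0)] at h
  · by_contra ha
    simp [ha, Nat.factorial_ne_zero] at h
  · rintro ⟨x, y⟩ hp hne
    simp only [mem_idxS] at hp
    have : y ≠ 0 := by
      rintro rfl
      apply hne
      simp at hp
      simp [hp]
    simp [this]
  · intro hn
    exact absurd ((mem_idxS _ _).2 (by simp)) hn

lemma descendU (a b : ℂ) (hb : b ≠ 0) (n : ℕ) (h0 : bigU a b n = 0)
    (h1 : bigU a b (n + 1) = 0) : False := by
  induction n with
  | zero => rw [bigU_zero] at h0; exact one_ne_zero h0
  | succ k ih =>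
    refine ih ?_ h0
    have r := recU a b k
    rw [h0, show k + 2 = k + 1 + 1 from rfl, h1] at r
    have h2 : (3 * (k : ℂ) + 2) ≠ 0 := by exact_mod_cast (3 * k + 1).succ_ne_zero
    have h3 : (3 * (k : ℂ) + 4) ≠ 0 := by exact_mod_cast (3 * k + 3).succ_ne_zero
    simpa [h2, h3, hb] using r

theorem stmt_12 (α₁ α₂ : ℂ) (u : ℕ → ℂ)
    (hu : ∀ k : ℕ, 1 ≤ k →
      u k = (1 / (k.factorial : ℂ)) *
        ∑ p ∈ (Finset.range (k + 1) ×ˢ Finset.range (k + 1)).filter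
            (fun p : ℕ × ℕ => p.1 + 2 * p.2 = k),
          (((k + p.1 + p.2).factorial : ℂ) /
              ((p.1.factorial : ℂ) * (p.2.factorial : ℂ))) * α₁ ^ p.1 * α₂ ^ p.2)
    (h : ∃ n : ℕ, 1 ≤ n ∧ u n = 0 ∧ u (n + 1) = 0) :
    α₁ = 0 ∧ α₂ = 0 := by
  obtain ⟨n, hn, h0, h1⟩ := h
  have h0' : bigU α₁ α₂ n = 0 := (hu n hn).symm.trans h0
  have h1' : bigU α₁ α₂ (n + 1) = 0 := (hu (n + 1) (by omega)).symm.trans h1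
  by_cases hb : α₂ = 0
  · subst hb
    exact ⟨bigU_b_zero _ _ h0', rfl⟩
  · exact (descendU _ _ hb n h0' h1').elim
end

section
/- For each n ∈ ℕ let P_n(X) = ∑_{0 ≤ k ≤ ⌊n/2⌋} ((2n−k)! / ((n−2k)!·k!)) X^k ∈ ℂ[X]. Then for every n ∈ ℕ the recurrence −3(3n+4)(3n+2)·X²·P_n(X) − (2n+3)(9X+2)·P_{n+1}(X) + (4X+1)·P_{n+2}(X) = 0 holds. -/
open Polynomial

/-- `P n = ∑_{0 ≤ k ≤ ⌊n/2⌋} ((2n−k)! / ((n−2k)!·k!)) Xᵏ ∈ ℂ[X]`. -/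
noncomputable def P (n : ℕ) : Polynomial ℂ :=
  ∑ k ∈ Finset.range (n / 2 + 1),
    C (((2 * n - k).factorial : ℂ) /
        (((n - 2 * k).factorial : ℂ) * (k.factorial : ℂ))) * X ^ k

lemma P_coeff_eq (n k m N : ℕ) (h : n = m + 2 * k) (hN : 2 * n = N + k) :
    (P n).coeff k = (N.factorial : ℂ) / ((m.factorial : ℂ) * (k.factorial : ℂ)) := by
  have h1 : 2 * n - k = N := by omega
  have h2 : n - 2 * k = m := by omega
  have h3 : k < n / 2 + 1 := by omega
  simp [P, coeff_C_mul, coeff_X_pow, h1, h2]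
  intro h4
  omega

lemma P_coeff_zero (n k : ℕ) (h : n < 2 * k) : (P n).coeff k = 0 := by
  simp [P, coeff_C_mul, coeff_X_pow]
  intro h4
  omega

lemma fs (n : ℕ) : ((n + 1).factorial : ℂ) = (n + 1) * n.factorial := by
  rw [Nat.factorial_succ]; push_cast; ring

lemma fne (n : ℕ) : (n.factorial : ℂ) ≠ 0 := by exact_mod_cast n.factorial_ne_zero

lemma sne (n : ℕ) : (n : ℂ) + 1 ≠ 0 := by exact_mod_cast n.succ_ne_zero
lemma sne2 (n : ℕ) : (n : ℂ) + 1 + 1 ≠ 0 := by exact_mod_cast (n+1).succ_ne_zero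
lemma sne3 (n : ℕ) : (n : ℂ) + 1 + 1 + 1 ≠ 0 := by exact_mod_cast (n+2).succ_ne_zero
lemma sne3' (n : ℕ) : (n : ℂ) + 3 ≠ 0 := by exact_mod_cast (n+2).succ_ne_zero
lemma sne3'' (n : ℕ) : (n : ℂ) + 2 + 1 ≠ 0 := by exact_mod_cast (n+2).succ_ne_zero

lemma rec0 (n : ℕ) : - (2 * n + 3 : ℂ) * (2 * (P (n+1)).coeff 0) + (P (n+2)).coeff 0 = 0 := by
  rw [P_coeff_eq (n+1) 0 (n+1) (2*n+1+1) (by omega) (by omega),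
    P_coeff_eq (n+2) 0 (n+1+1) (2*n+1+1+1+1) (by omega) (by omega)]
  have := fne n
  have := sne n
  have := sne2 n
  simp only [fs, Nat.factorial_zero]
  push_cast
  field_simp
  ring

lemma rec1 (n : ℕ) : - (2 * n + 3 : ℂ) * (9 * (P (n+1)).coeff 0 + 2 * (P (n+1)).coeff 1)
    + 4 * (P (n+2)).coeff 0 + (P (n+2)).coeff 1 = 0 := by
  rcases n with _ | n
  · rw [P_coeff_eq 1 0 1 2 (by omega) (by omega), P_coeff_zero 1 1 (by omega),
      P_coeff_eq 2 0 2 4 (by omega) (by omega), P_coeff_eq 2 1 0 3 (by omega) (by omega)]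
    norm_num [Nat.factorial]
  · rw [P_coeff_eq (n+1+1) 0 (n+1+1) (2*n+1+1+1+1) (by omega) (by omega),
      P_coeff_eq (n+1+1) 1 n (2*n+1+1+1) (by omega) (by omega),
      P_coeff_eq (n+1+2) 0 (n+1+1+1) (2*n+1+1+1+1+1+1) (by omega) (by omega),
      P_coeff_eq (n+1+2) 1 (n+1) (2*n+1+1+1+1+1) (by omega) (by omega)]
    have := fne n
    have := sne n
    have := sne2 n
    have := sne3 n
    have := sne3' n
    have := sne3'' n
    simp only [fs, Nat.factorial_zero, Nat.factorial_one]
    push_cast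
    field_simp
    ring

lemma rec2 (n j : ℕ) : -3 * (3 * n + 4 : ℂ) * (3 * n + 2) * (P n).coeff j
    - (2 * n + 3 : ℂ) * (9 * (P (n+1)).coeff (j+1) + 2 * (P (n+1)).coeff (j+1+1))
    + 4 * (P (n+2)).coeff (j+1) + (P (n+2)).coeff (j+1+1) = 0 := by
  have := fne j
  have := sne j
  have := sne2 j
  by_cases h : n < 2 * j
  · rw [P_coeff_zero n j (by omega), P_coeff_zero (n+1) (j+1) (by omega),
      P_coeff_zero (n+1) (j+1+1) (by omega), P_coeff_zero (n+2) (j+1) (by omega),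
      P_coeff_zero (n+2) (j+1+1) (by omega)]
    simp
  obtain ⟨m, rfl⟩ : ∃ m, n = m + 2 * j := ⟨n - 2 * j, by omega⟩
  rw [P_coeff_eq (m+2*j) j m (2*m+3*j) (by omega) (by omega),
    P_coeff_eq (m+2*j+2) (j+1) m (2*m+3*j+1+1+1) (by omega) (by omega)]
  rcases m with _ | m
  · rw [P_coeff_zero _ (j+1) (by omega),
      P_coeff_zero _ (j+1+1) (by omega), P_coeff_zero _ (j+1+1) (by omega)]
    simp only [fs, Nat.factorial_zero]
    push_cast
    field_simp
    ring
  rw [P_coeff_eq (m+1+2*j+1) (j+1) m (2*(m+1)+3*j+1) (by omega) (by omega)]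
  rcases m with _ | m
  · rw [P_coeff_zero _ (j+1+1) (by omega), P_coeff_zero _ (j+1+1) (by omega)]
    simp only [fs, Nat.factorial_zero]
    push_cast
    field_simp
    ring
  have := sne m
  have := sne2 m
  rw [P_coeff_eq (m+1+1+2*j+2) (j+1+1) m (2*(m+1+1)+3*j+1+1) (by omega) (by omega)]
  rcases m with _ | m
  · rw [P_coeff_zero _ (j+1+1) (by omega)]
    simp only [fs, Nat.factorial_zero]
    push_cast
    field_simp
    ring
  have := fne m
  have := sne m
  have := sne2 m
  have := sne3 m
  have := sne3' m
  have := sne3'' m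
  rw [P_coeff_eq (m+1+1+1+2*j+1) (j+1+1) m (2*(m+1+1+1)+3*j) (by omega) (by omega)]
  simp only [fs _]
  push_cast
  generalize ((2*(m+1+1+1)+3*j).factorial : ℂ) = F
  field_simp
  ring

theorem stmt_13 (n : ℕ) :
    C (-3 * ((3 * n + 4 : ℕ) : ℂ) * ((3 * n + 2 : ℕ) : ℂ)) * X ^ 2 * P n
      - C (((2 * n + 3 : ℕ) : ℂ)) * (C (9 : ℂ) * X + C (2 : ℂ)) * P (n + 1)
      + (C (4 : ℂ) * X + C (1 : ℂ)) * P (n + 2) = 0 := by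
  have e : C (-3 * ((3 * n + 4 : ℕ) : ℂ) * ((3 * n + 2 : ℕ) : ℂ)) * X ^ 2 * P n
      - C (((2 * n + 3 : ℕ) : ℂ)) * (C (9 : ℂ) * X + C (2 : ℂ)) * P (n + 1)
      + (C (4 : ℂ) * X + C (1 : ℂ)) * P (n + 2)
    = C (-3 * ((3 * n + 4 : ℕ) : ℂ) * ((3 * n + 2 : ℕ) : ℂ)) * (X * (X * P n))
      - C (((2 * n + 3 : ℕ) : ℂ)) * (C (9 : ℂ) * (X * P (n + 1)) + C (2 : ℂ) * P (n + 1))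
      + (C (4 : ℂ) * (X * P (n + 2)) + C (1 : ℂ) * P (n + 2)) := by ring
  rw [e]
  ext k
  rcases k with _ | _ | j
  · have := rec0 n
    simp only [coeff_add, coeff_sub, coeff_C_mul, coeff_X_mul_zero, coeff_zero]
    push_cast
    linear_combination this
  · have := rec1 n
    simp only [coeff_add, coeff_sub, coeff_C_mul, coeff_X_mul, coeff_X_mul_zero, coeff_zero]
    push_cast
    linear_combination this
  · have := rec2 n j
    simp only [coeff_add, coeff_sub, coeff_C_mul, coeff_X_mul, coeff_zero]
    push_cast
    linear_combination this
end
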